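/- Truncation Lemma, first step (truncating the tracked template): Let U_1 and U_2 be two TA templates with conjunctive guards, let Φ(1_2) be an IMTL formula over the first instance of U_2, and let Q ∈ {E, E_inf, E_fin} with corresponding cutoff c_2 = 2|U_2|+1 if Q = E, c_2 = 2 if Q = E_inf, c_2 = 1 if Q = E_fin. Then for all n_1, n_2 ≥ 1: (U_1,U_2)^{(n_1,n_2)} ⊨ Q Φ(1_2) if and only if (U_1,U_2)^{(n_1, min(n_2,c_2))} ⊨ Q Φ(1_2). (This follows from the Bounding Lemma by treating the parallel composition of the n_1 copies of U_1 as a single template.) -/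

import Mathlib

open scoped ENNReal NNReal

namespace PNTA

/-! ### Basic ingredients: comparisons and clock constraints -/

/-- Comparison operators `<, ≤, >, ≥, =`. -/
inductive Cmp : Type
  | lt | le | gt | ge | eq

/-- Evaluation of a comparison operator on nonnegative reals. -/
def Cmp.eval : Cmp → NNReal → NNReal → Prop
  | .lt, a, b => a < b
  | .le, a, b => a ≤ b
  | .gt, a, b => b < a
  | .ge, a, b => b ≤ a
  | .eq, a, b => a = b

/-- Clock constraints `TC(C)`: Boolean combinations of comparisons of clocks with
clocks or with nonnegative rational constants. -/
inductive ClockConstraint (C : Type) : Type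
  | tt
  | neg (g : ClockConstraint C)
  | disj (g₁ g₂ : ClockConstraint C)
  | cmpClock (op : Cmp) (c₁ c₂ : C)
  | cmpConst (op : Cmp) (c : C) (q : ℚ≥0)

/-- Satisfaction of a clock constraint by a clock valuation. -/
def ClockConstraint.sat {C : Type} (u : C → NNReal) : ClockConstraint C → Prop
  | .tt => True
  | .neg g => ¬ g.sat u
  | .disj g₁ g₂ => g₁.sat u ∨ g₂.sat u
  | .cmpClock op c₁ c₂ => op.eval (u c₁) (u c₂)
  | .cmpConst op c q => op.eval (u c) (q : NNReal)

/-! ### Parameterized networks of timed automata with conjunctive guards -/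

/-- A parameterized network of `k` timed automaton templates
`U_l = ⟨S_l, ŝ_l, C_l, Γ_l, τ_l, I_l⟩` with **conjunctive guards**.
A conjunctive guard assigns to every template `h` a set of states of `U_h`
(the disjunction `ŝ_h ∨ s_h¹ ∨ ⋯`), which must contain the initial state `ŝ_h`;
it is satisfied by a global state when every *other* instance of every template `h`
is in a state belonging to the corresponding set. -/
structure ConjPNTA (k : ℕ) : Type 1 where
  /-- states of each template -/
  State : Fin k → Type
  stateFintype : ∀ l, Fintype (State l)
  /-- initial state of each template -/
  init : ∀ l, State l
  /-- clock variables of each template -/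
  Clock : Fin k → Type
  clockFintype : ∀ l, Fintype (Clock l)
  /-- transitions `s —(g,r,γ)→ t`: source, clock constraint, reset set, conjunctive guard, target -/
  trans : ∀ l, Set (State l × ClockConstraint (Clock l) × Set (Clock l) ×
      ((h : Fin k) → Set (State h)) × State l)
  trans_finite : ∀ l, (trans l).Finite
  /-- guards are conjunctive: every disjunct contains the initial state -/
  guards_conj : ∀ l tr, tr ∈ trans l → ∀ h, init h ∈ tr.2.2.2.1 h
  /-- state invariants -/
  inv : ∀ l, State l → ClockConstraint (Clock l)
  inv_init : ∀ l, inv l (init l) = ClockConstraint.tt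

variable {k : ℕ}

/-- `|U_l|`: the number of states of template `l`. -/
def ConjPNTA.size (A : ConjPNTA k) (l : Fin k) : ℕ :=
  @Fintype.card (A.State l) (A.stateFintype l)

lemma ConjPNTA.size_pos (A : ConjPNTA k) (l : Fin k) : 0 < A.size l :=
  @Fintype.card_pos _ (A.stateFintype l) ⟨A.init l⟩

/-- A configuration of the PNTA `(U_1,…,U_k)^{(n_1,…,n_k)}`: each instance `U_l^i`
(`l < k`, `i < n_l`) has a current state and a clock valuation satisfying the
invariant of that state. -/
structure Config (A : ConjPNTA k) (n : Fin k → ℕ) : Type where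
  st : ∀ l, Fin (n l) → A.State l
  cl : ∀ l, Fin (n l) → A.Clock l → NNReal
  inv_sat : ∀ l i, (A.inv l (st l i)).sat (cl l i)

/-- The initial configuration: every instance in its initial state, all clocks `0`. -/
def initConfig (A : ConjPNTA k) (n : Fin k → ℕ) : Config A n where
  st := fun l _ => A.init l
  cl := fun _ _ _ => 0
  inv_sat := fun l _ => by rw [A.inv_init l]; exact trivial

/-- The global state of configuration `c` satisfies the conjunctive guard `γ`
from the point of view of instance `(l, i)`: every other instance is in one of
the allowed states. -/
def guardSat {A : ConjPNTA k} {n : Fin k → ℕ} (c : Config A n) (l : Fin k) (i : Fin (n l))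
    (γ : (h : Fin k) → Set (A.State h)) : Prop :=
  ∀ p : Σ h, Fin (n h), p ≠ ⟨l, i⟩ → c.st p.1 p.2 ∈ γ p.1

/-- Delay transition `c →d c'`: all clocks of all instances advance by `d`,
states are unchanged, and all invariants hold throughout the delay. -/
def DelayStep {A : ConjPNTA k} {n : Fin k → ℕ} (d : NNReal) (c c' : Config A n) : Prop :=
  c'.st = c.st ∧
  (∀ l i x, c'.cl l i x = c.cl l i x + d) ∧
  (∀ l i (d' : NNReal), d' ≤ d → (A.inv l (c.st l i)).sat fun x => c.cl l i x + d')

/-- Synchronization transition `c →γ c'`: exactly one instance `U_l^i` fires a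
transition `s —(g,r,γ)→ t` of `τ_l`; its current state is `s`, its clocks satisfy `g`,
the global state satisfies the conjunctive guard `γ`, its clocks in `r` are reset to 0,
and all other instances are unchanged. -/
def SyncStep {A : ConjPNTA k} {n : Fin k → ℕ} (c c' : Config A n) : Prop :=
  ∃ (l : Fin k) (i : Fin (n l)), ∃ tr ∈ A.trans l,
    tr.1 = c.st l i ∧
    tr.2.1.sat (c.cl l i) ∧
    guardSat c l i tr.2.2.2.1 ∧
    c'.st l i = tr.2.2.2.2 ∧
    (∀ x, (x ∈ tr.2.2.1 → c'.cl l i x = 0) ∧ (x ∉ tr.2.2.1 → c'.cl l i x = c.cl l i x)) ∧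
    (∀ p : Σ h, Fin (n h), p ≠ ⟨l, i⟩ → c'.st p.1 p.2 = c.st p.1 p.2 ∧ c'.cl p.1 p.2 = c.cl p.1 p.2)

/-- A step of a timed computation: a delay transition with positive delay
(time advances accordingly) or a synchronization transition (time unchanged). -/
def Step {A : ConjPNTA k} {n : Fin k → ℕ} (c c' : Config A n) (t t' : NNReal) : Prop :=
  (∃ d : NNReal, 0 < d ∧ DelayStep d c c' ∧ t' = t + d) ∨ (SyncStep c c' ∧ t' = t)

/-- A timed computation starting at configuration `c₀` at time `0`: a finite or
infinite sequence of configuration/time pairs (represented as a partial function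
on positions with downward closed domain) whose consecutive elements are related
by delay or synchronization transitions. -/
structure TimedComp (A : ConjPNTA k) (n : Fin k → ℕ) (c₀ : Config A n) : Type where
  seq : ℕ → Option (Config A n × NNReal)
  zero_def : seq 0 = some (c₀, 0)
  downward : ∀ v, (seq (v + 1)).isSome → (seq v).isSome
  step : ∀ v c t c' t', seq v = some (c, t) → seq (v + 1) = some (c', t') → Step c c' t t'

namespace TimedComp

variable {A : ConjPNTA k} {n : Fin k → ℕ} {c₀ : Config A n}

/-- An infinite timed computation. -/
def Infinite (x : TimedComp A n c₀) : Prop := ∀ v, (x.seq v).isSome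

/-- A (not necessarily maximal) finite timed computation. -/
def Finite (x : TimedComp A n c₀) : Prop := ∃ v, x.seq v = none

/-- A deadlocked timed computation: maximal finite, i.e. all transitions are
disabled at its final configuration. -/
def Deadlocked (x : TimedComp A n c₀) : Prop :=
  ∃ v c t, x.seq v = some (c, t) ∧ x.seq (v + 1) = none ∧
    ∀ c' : Config A n, ¬ ((∃ d : NNReal, 0 < d ∧ DelayStep d c c') ∨ SyncStep c c')

/-- The time stamp at position `v` (junk value `0` outside the domain). -/
def timeAt (x : TimedComp A n c₀) (v : ℕ) : NNReal := ((x.seq v).map Prod.snd).getD 0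

end TimedComp

/-! ### s-paths (continuous-time signals induced by timed computations) -/

/-- An s-path: a continuous-time signal of configurations, together with its
(possibly infinite) length. -/
structure SPath (A : ConjPNTA k) (n : Fin k → ℕ) : Type where
  len : ℝ≥0∞
  toFun : NNReal → Config A n

/-- The suffix `ρ⌊t` of an s-path. -/
noncomputable def SPath.suffix {A : ConjPNTA k} {n : Fin k → ℕ} (ρ : SPath A n) (t : NNReal) : SPath A n where
  len := ρ.len - (t : ℝ≥0∞)
  toFun := fun s => ρ.toFun (t + s)

/-- The timed computation `x` induces the s-path `ρ`: for every step of `x` from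
`(c_v,t_v)` to `(c_{v+1},t_{v+1})` and every time `s ∈ [t_v, t_{v+1})`, `ρ(s)` has
the states of `c_v` with clocks advanced by `s - t_v`; the length of `ρ` is the
supremum of the time stamps (for an infinite computation), resp. the final time
stamp (for a finite one, at which the final configuration persists). -/
def Induces {A : ConjPNTA k} {n : Fin k → ℕ} {c₀ : Config A n}
    (x : TimedComp A n c₀) (ρ : SPath A n) : Prop :=
  (∀ v c t c' t', x.seq v = some (c, t) → x.seq (v + 1) = some (c', t') →
    ∀ s : NNReal, t ≤ s → s < t' →
      (ρ.toFun s).st = c.st ∧ ∀ l i cx, (ρ.toFun s).cl l i cx = c.cl l i cx + (s - t)) ∧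
  (x.Infinite → ρ.len = ⨆ v, (x.timeAt v : ℝ≥0∞)) ∧
  (∀ v c t, x.seq v = some (c, t) → x.seq (v + 1) = none →
    ρ.len = (t : ℝ≥0∞) ∧ (ρ.toFun t).st = c.st ∧ ∀ l i cx, (ρ.toFun t).cl l i cx = c.cl l i cx)

/-- `tcomp(ρ)`: the set of timed computations (from `c₀`) inducing the s-path `ρ`. -/
def tcomp {A : ConjPNTA k} {n : Fin k → ℕ} (c₀ : Config A n) (ρ : SPath A n) :
    Set (TimedComp A n c₀) :=
  {x | Induces x ρ}

/-- `|ρ| = ω` : `ρ` is (induced by) an infinite timed computation from `c₀`. -/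
def SPath.IsInfiniteFrom {A : ConjPNTA k} {n : Fin k → ℕ} (c₀ : Config A n) (ρ : SPath A n) : Prop :=
  ∃ x : TimedComp A n c₀, Induces x ρ ∧ x.Infinite

/-- `|ρ| < ω` : `ρ` is induced by a finite timed computation from `c₀`. -/
def SPath.IsFiniteFrom {A : ConjPNTA k} {n : Fin k → ℕ} (c₀ : Config A n) (ρ : SPath A n) : Prop :=
  ∃ x : TimedComp A n c₀, Induces x ρ ∧ x.Finite

/-- `deadlock(ρ)` : `ρ` is induced by a deadlocked timed computation from `c₀`. -/
def SPath.IsDeadlockedFrom {A : ConjPNTA k} {n : Fin k → ℕ} (c₀ : Config A n) (ρ : SPath A n) : Prop :=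
  ∃ x : TimedComp A n c₀, Induces x ρ ∧ x.Deadlocked

/-! ### IMTL formulae and their continuous-time semantics -/

/-- IMTL path formulae over atomic propositions `α`: built from `⊤` and atoms by
Boolean operators (`∧`, `¬`) and time-constrained until `Φ U_{∼q} Ψ` with
`∼ ∈ {<,≤,>,≥,=}` and `q ∈ ℚ≥0`. -/
inductive IMTL (α : Type) : Type
  | tt
  | atom (a : α)
  | and (φ ψ : IMTL α)
  | not (φ : IMTL α)
  | untl (op : Cmp) (q : ℚ≥0) (φ ψ : IMTL α)

/-- Satisfaction of an IMTL path formula on an s-path, given a valuation of the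
atomic propositions on configurations. -/
def satIMTL {A : ConjPNTA k} {n : Fin k → ℕ} {α : Type} (val : α → Config A n → Prop) :
    IMTL α → SPath A n → Prop
  | .tt, _ => True
  | .atom a, ρ => val a (ρ.toFun 0)
  | .and φ ψ, ρ => satIMTL val φ ρ ∧ satIMTL val ψ ρ
  | .not φ, ρ => ¬ satIMTL val φ ρ
  | .untl op q φ ψ, ρ => ∃ t' : NNReal, (t' : ℝ≥0∞) ≤ ρ.len ∧ op.eval t' (q : NNReal) ∧
      satIMTL val ψ (ρ.suffix t') ∧ ∀ t : NNReal, t < t' → satIMTL val φ (ρ.suffix t)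

/-- The six path quantifiers `A, A_inf, A_fin, E, E_inf, E_fin`. -/
inductive PathQ : Type
  | A | Ainf | Afin | E | Einf | Efin

/-- `(U_1,…,U_k)^{(n_1,…,n_k)} ⊨ Q Φ` for a path quantifier `Q`: quantification over
the s-paths from the initial configuration that are infinite or deadlocked (`A`, `E`),
infinite (`A_inf`, `E_inf`), resp. finite (`A_fin`, `E_fin`). -/
def SatQ (A : ConjPNTA k) (n : Fin k → ℕ) {α : Type} (val : α → Config A n → Prop)
    (Q : PathQ) (Φ : IMTL α) : Prop :=
  match Q with
  | .A => ∀ ρ : SPath A n,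
      (ρ.IsInfiniteFrom (initConfig A n) ∨ ρ.IsDeadlockedFrom (initConfig A n)) → satIMTL val Φ ρ
  | .Ainf => ∀ ρ : SPath A n, ρ.IsInfiniteFrom (initConfig A n) → satIMTL val Φ ρ
  | .Afin => ∀ ρ : SPath A n, ρ.IsFiniteFrom (initConfig A n) → satIMTL val Φ ρ
  | .E => ∃ ρ : SPath A n,
      (ρ.IsInfiniteFrom (initConfig A n) ∨ ρ.IsDeadlockedFrom (initConfig A n)) ∧ satIMTL val Φ ρ
  | .Einf => ∃ ρ : SPath A n, ρ.IsInfiniteFrom (initConfig A n) ∧ satIMTL val Φ ρ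
  | .Efin => ∃ ρ : SPath A n, ρ.IsFiniteFrom (initConfig A n) ∧ satIMTL val Φ ρ

/-- Atomic propositions of the indexed formula `Φ(i_{l₁},…,i_{l_h})`: a quantified
slot `j < h` together with a state (= atomic proposition) of template `l_j`. -/
def Atoms (A : ConjPNTA k) {h : ℕ} (l : Fin h → Fin k) : Type :=
  Σ j : Fin h, A.State (l j)

/-- The valuation of the atoms, given an assignment `inst` of concrete instances to
the quantified slots: `p(l_j, i_{l_j})` holds iff instance `i_{l_j}` of template `l_j`
is in state `p`. -/
def atomVal (A : ConjPNTA k) (n : Fin k → ℕ) {h : ℕ} (l : Fin h → Fin k)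
    (inst : ∀ j : Fin h, Fin (n (l j))) : Atoms A l → Config A n → Prop :=
  fun a c => c.st (l a.1) (inst a.1) = a.2

/-- `(U_1,…,U_k)^{(n_1,…,n_k)} ⊨ ⋀_{i_{l₁},…,i_{l_h}} Q Φ(i_{l₁},…,i_{l_h})`. -/
def SatFormula (A : ConjPNTA k) (n : Fin k → ℕ) {h : ℕ} (l : Fin h → Fin k)
    (Q : PathQ) (Φ : IMTL (Atoms A l)) : Prop :=
  ∀ inst : ∀ j : Fin h, Fin (n (l j)), SatQ A n (atomVal A n l inst) Q Φ

/-! ### Helpers for networks of two templates -/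

/-- The size function of the system `(U₁,U₂)^{(a,b)}`. -/
def two (a b : ℕ) : Fin 2 → ℕ := fun m => if m.val = 0 then a else b

/-- The valuation interpreting the atoms of a formula `Φ(1_t)` over the *first*
instance of template `t`. -/
def valFirst (A : ConjPNTA 2) (n : Fin 2 → ℕ) (t : Fin 2) (hp : 0 < n t) :
    A.State t → Config A n → Prop :=
  fun p c => c.st t ⟨0, hp⟩ = p


/-! ### Cutoffs for two-template systems -/

/-- Cutoff for the template tracked by the formula `Φ(1₂)` (part (i)):
`2` for `E_inf`, `1` for `E_fin`, `2|U₂| + 1` for `E`. -/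
def cutoffTracked (A : ConjPNTA 2) : PathQ → ℕ
  | PathQ.Einf => 2
  | PathQ.Efin => 1
  | PathQ.E => 2 * A.size 1 + 1
  | _ => 1

/-- Cutoff for the untracked template (part (ii)):
`1` for `E_inf`, `1` for `E_fin`, `2|U₂|` for `E`. -/
def cutoffOther (A : ConjPNTA 2) : PathQ → ℕ
  | PathQ.Einf => 1
  | PathQ.Efin => 1
  | PathQ.E => 2 * A.size 1
  | _ => 1

lemma cutoffTracked_pos (A : ConjPNTA 2) (Q : PathQ) : 0 < cutoffTracked A Q := by
  have := A.size_pos 1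
  cases Q <;> simp only [cutoffTracked] <;> omega

lemma cutoffOther_pos (A : ConjPNTA 2) (Q : PathQ) : 0 < cutoffOther A Q := by
  have := A.size_pos 1
  cases Q <;> simp only [cutoffOther] <;> omega

/-! ### Stuttering, reindexings and local computations -/

/-- `y` is a *stuttering* of `x`: it is obtained from `x` by inserting, between
consecutive elements, finitely many intermediate observations of the same states
with clocks advanced by small delays `δ`, without altering the original elements.
The map `m` sends a position of `y` to the position of `x` it refines. -/
def Stuttering {A : ConjPNTA k} {n : Fin k → ℕ} {c₀ : Config A n}
    (y x : TimedComp A n c₀) : Prop :=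
  ∃ m : ℕ → ℕ, Monotone m ∧ m 0 = 0 ∧
    (∀ w, (y.seq w).isSome → (x.seq (m w)).isSome) ∧
    (∀ w, y.seq w = none → ∃ v, x.seq v = none) ∧
    (∀ v, Set.Finite {w | (y.seq w).isSome ∧ m w = v}) ∧
    (∀ v, (x.seq v).isSome → ∃ w, m w = v ∧ y.seq w = x.seq v) ∧
    (∀ w cy ty cx tx, y.seq w = some (cy, ty) → x.seq (m w) = some (cx, tx) →
      tx ≤ ty ∧ cy.st = cx.st ∧ (∀ l i cxk, cy.cl l i cxk = cx.cl l i cxk + (ty - tx)) ∧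
      ∀ cx' tx', x.seq (m w + 1) = some (cx', tx') → ty ≤ tx')

/-- A reindexing of positions between a timed computation `x` and a timed
computation `y` obtained from `x` by collapsing some steps. -/
def Reindex {A : ConjPNTA k} {n n' : Fin k → ℕ} {c₀ : Config A n} {c₀' : Config A n'}
    (x : TimedComp A n c₀) (y : TimedComp A n' c₀') (m : ℕ → ℕ) : Prop :=
  Monotone m ∧ m 0 = 0 ∧
    (∀ v, (x.seq v).isSome → (y.seq (m v)).isSome) ∧
    (∀ w, (y.seq w).isSome → ∃ v, (x.seq v).isSome ∧ m v = w)

/-- The local timed computation of instance `(l, iy)` of `y` coincides (through the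
reindexing `m`) with the local timed computation of instance `(l, ix)` of `x`:
same times, same states, same clock values. -/
def LocalMatch {A : ConjPNTA k} {n n' : Fin k → ℕ} {c₀ : Config A n} {c₀' : Config A n'}
    (x : TimedComp A n c₀) (y : TimedComp A n' c₀') (m : ℕ → ℕ)
    (l : Fin k) (ix : Fin (n l)) (iy : Fin (n' l)) : Prop :=
  ∀ v c t c' t', x.seq v = some (c, t) → y.seq (m v) = some (c', t') →
    t' = t ∧ c'.st l iy = c.st l ix ∧ c'.cl l iy = c.cl l ix

/-- Instance `(l, i)` of `y` follows the idle local computation: it stutters in the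
initial state `ŝ_l` with all its clocks equal to the elapsed time. -/
def IdleLocal {A : ConjPNTA k} {n : Fin k → ℕ} {c₀ : Config A n}
    (y : TimedComp A n c₀) (l : Fin k) (i : Fin (n l)) : Prop :=
  ∀ v c t, y.seq v = some (c, t) → c.st l i = A.init l ∧ ∀ cx, c.cl l i cx = t

/-- The local computation of instance `(l, i)` of `x` is infinite: the instance takes
infinitely many (observable) synchronization steps. -/
def LocalInfinite {A : ConjPNTA k} {n : Fin k → ℕ} {c₀ : Config A n}
    (x : TimedComp A n c₀) (l : Fin k) (i : Fin (n l)) : Prop :=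
  ∀ N, ∃ v, N ≤ v ∧ ∃ c t c' t', x.seq v = some (c, t) ∧ x.seq (v + 1) = some (c', t') ∧
    t' = t ∧ ¬ (c'.st l i = c.st l i ∧ c'.cl l i = c.cl l i)

lemma two_le_two_succ (n : ℕ) (l : Fin 2) : two 1 n l ≤ two 1 (n + 1) l := by
  unfold two; split <;> omega

lemma c2two (A : ConjPNTA 2) {c₂ : ℕ} (hc : c₂ = 2 ∨ c₂ = 2 * A.size 1 + 1) : 1 < c₂ := by
  have := A.size_pos 1
  rcases hc with h | h <;> omega

lemma c2pos (A : ConjPNTA 2) {c₂ : ℕ} (hc : c₂ = 2 ∨ c₂ = 2 * A.size 1 + 1) : 0 < c₂ :=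
  Nat.lt_of_lt_of_le Nat.one_pos (Nat.le_of_lt (c2two A hc))

lemma npos (A : ConjPNTA 2) {c₂ n : ℕ} (hc : c₂ = 2 ∨ c₂ = 2 * A.size 1 + 1) (hn : c₂ ≤ n) :
    0 < n := Nat.lt_of_lt_of_le (c2pos A hc) hn

/-! ### Auxiliary material for the proof -/

section Aux

variable {A : ConjPNTA k} {n n' : Fin k → ℕ}

lemma Config.ext' {c c' : Config A n} (h₁ : c.st = c'.st) (h₂ : c.cl = c'.cl) : c = c' := by
  cases c; cases c'; simp only at h₁ h₂; subst h₁; subst h₂; rfl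

/-- `c'` is `c` observed after a delay `d`. -/
def Obs (c' c : Config A n) (d : NNReal) : Prop :=
  c'.st = c.st ∧ ∀ l i x, c'.cl l i x = c.cl l i x + d

lemma sat_congr {α : Type} (val : α → Config A n → Prop) (val' : α → Config A n' → Prop)
    (Φ : IMTL α) : ∀ (ρ : SPath A n) (ρ' : SPath A n'), ρ.len = ρ'.len →
    (∀ a s, val a (ρ.toFun s) ↔ val' a (ρ'.toFun s)) →
    (satIMTL val Φ ρ ↔ satIMTL val' Φ ρ') := by
  induction Φ with
  | tt => intros; simp [satIMTL]
  | atom a => intro ρ ρ' _ h; exact h a 0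
  | and φ ψ ih₁ ih₂ =>
    intro ρ ρ' hl h
    simp only [satIMTL, ih₁ ρ ρ' hl h, ih₂ ρ ρ' hl h]
  | not φ ih => intro ρ ρ' hl h; simp only [satIMTL, ih ρ ρ' hl h]
  | untl op q φ ψ ih₁ ih₂ =>
    intro ρ ρ' hl h
    have hs : ∀ t, (ρ.suffix t).len = (ρ'.suffix t).len := fun t => by
      simp only [SPath.suffix, hl]
    have hv : ∀ t a s, val a ((ρ.suffix t).toFun s) ↔ val' a ((ρ'.suffix t).toFun s) :=
      fun t a s => h a (t + s)
    simp only [satIMTL, hl, fun t => ih₁ _ _ (hs t) (hv t), fun t => ih₂ _ _ (hs t) (hv t)]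

/-! #### Finite and infinite runs -/

inductive FinRun (c₀ : Config A n) (g : NNReal → Config A n) : Config A n → NNReal → Prop
  | nil : FinRun c₀ g c₀ 0
  | snoc {c t c' t'} : FinRun c₀ g c t → Step c c' t t' →
      (∀ s, t ≤ s → s < t' → Obs (g s) c (s - t)) → FinRun c₀ g c' t'

lemma Step.le {c c' : Config A n} {t t' : NNReal} (h : Step c c' t t') : t ≤ t' := by
  rcases h with ⟨d, _, _, rfl⟩ | ⟨_, rfl⟩
  · exact le_self_add
  · exact le_rfl

lemma finRun_congr {c₀ c : Config A n} {g g' : NNReal → Config A n} {t : NNReal}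
    (h : FinRun c₀ g c t) : (∀ s, s < t → g s = g' s) → FinRun c₀ g' c t := by
  induction h with
  | nil => intro _; exact .nil
  | snoc h hs ho ih =>
    intro hg
    refine .snoc (ih fun s hs' => hg s (lt_of_lt_of_le hs' hs.le)) hs fun s h₁ h₂ => ?_
    rw [← hg s h₂]; exact ho s h₁ h₂

lemma finRun_of_comp {c₀ : Config A n} (x : TimedComp A n c₀) {ρ : SPath A n} (h : Induces x ρ) :
    ∀ v c t, x.seq v = some (c, t) → FinRun c₀ ρ.toFun c t := by
  intro v
  induction v with
  | zero =>
    intro c t hv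
    rw [x.zero_def] at hv
    simp only [Option.some.injEq, Prod.mk.injEq] at hv
    obtain ⟨rfl, rfl⟩ := hv
    exact .nil
  | succ v ih =>
    intro c t hv
    have := x.downward v (by rw [hv]; rfl)
    obtain ⟨⟨c', t'⟩, hc⟩ := Option.isSome_iff_exists.mp this
    exact .snoc (ih _ _ hc) (x.step _ _ _ _ _ hc hv) (h.1 _ _ _ _ _ hc hv)

lemma comp_of_finRun {c₀ c : Config A n} {g : NNReal → Config A n} {t : NNReal}
    (h : FinRun c₀ g c t) : ∃ (x : TimedComp A n c₀) (M : ℕ), x.seq M = some (c, t) ∧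
      (∀ v, M < v → x.seq v = none) ∧
      (∀ v c t c' t', x.seq v = some (c, t) → x.seq (v + 1) = some (c', t') →
        ∀ s : NNReal, t ≤ s → s < t' → Obs (g s) c (s - t)) := by
  induction h with
  | nil =>
    refine ⟨⟨fun v => if v = 0 then some (c₀, 0) else none, by simp, by simp, by simp⟩, 0, ?_⟩
    refine ⟨by simp, fun v hv => by simp; omega, by simp⟩
  | @snoc c t c' t' h hs ho ih =>
    obtain ⟨x, M, hM, hn, hx⟩ := ih
    have key : ∀ v c₁ t₁ c₂ t₂,
        (if v = M + 1 then some (c', t') else x.seq v) = some (c₁, t₁) →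
        (if v + 1 = M + 1 then some (c', t') else x.seq (v + 1)) = some (c₂, t₂) →
        (x.seq v = some (c₁, t₁) ∧ x.seq (v + 1) = some (c₂, t₂)) ∨
        (c₁ = c ∧ t₁ = t ∧ c₂ = c' ∧ t₂ = t') := by
      intro v c₁ t₁ c₂ t₂ h₁ h₂
      by_cases hv : v = M
      · subst hv
        simp only [Nat.left_eq_add, one_ne_zero, if_false, if_true, hM, Option.some.injEq,
          Prod.mk.injEq] at h₁ h₂
        right
        exact ⟨h₁.1.symm, h₁.2.symm, h₂.1.symm, h₂.2.symm⟩
      · by_cases hv' : v = M + 1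
        · subst hv'
          rw [if_neg (by omega), hn _ (by omega)] at h₂
          cases h₂
        · rw [if_neg hv'] at h₁
          rw [if_neg (by omega)] at h₂
          exact .inl ⟨h₁, h₂⟩
    refine ⟨⟨fun v => if v = M + 1 then some (c', t') else x.seq v, ?_, ?_, ?_⟩, M + 1, ?_, ?_, ?_⟩
    · simp [x.zero_def]
    · intro v hv
      by_cases h1 : v = M + 1
      · simp [h1]
      · by_cases h2 : v = M
        · subst h2; simp [hM]
        · simp only [Nat.add_right_cancel_iff, h2, if_false] at hv
          simp only [h1, if_false]
          exact x.downward v hv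
    · intro v c₁ t₁ c₂ t₂ h₁ h₂
      rcases key v c₁ t₁ c₂ t₂ h₁ h₂ with ⟨h₁, h₂⟩ | ⟨rfl, rfl, rfl, rfl⟩
      · exact x.step _ _ _ _ _ h₁ h₂
      · exact hs
    · simp
    · intro v hv
      simp only
      rw [if_neg (by omega)]
      exact hn v (by omega)
    · intro v c₁ t₁ c₂ t₂ h₁ h₂
      rcases key v c₁ t₁ c₂ t₂ h₁ h₂ with ⟨h₁, h₂⟩ | ⟨rfl, rfl, rfl, rfl⟩
      · exact hx _ _ _ _ _ h₁ h₂
      · exact ho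

lemma exists_last {c₀ : Config A n} (x : TimedComp A n c₀) (hx : x.Finite) :
    ∃ v c t, x.seq v = some (c, t) ∧ x.seq (v + 1) = none := by
  obtain ⟨v, hv⟩ := hx
  induction v with
  | zero => rw [x.zero_def] at hv; cases hv
  | succ v ih =>
    rcases h : x.seq v with _ | ⟨c, t⟩
    · exact ih h
    · exact ⟨v, c, t, h, hv⟩

lemma comp_unique_last {c₀ : Config A n} (x : TimedComp A n c₀) {M : ℕ} {c : Config A n}
    {t : NNReal} (hM : x.seq M = some (c, t)) (hn : ∀ v, M < v → x.seq v = none) {v : ℕ}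
    {c₁ : Config A n} {t₁ : NNReal} (h₁ : x.seq v = some (c₁, t₁)) (h₂ : x.seq (v + 1) = none) :
    v = M ∧ c₁ = c ∧ t₁ = t := by
  have h3 : v ≤ M := by
    by_contra hlt
    rw [hn v (by omega)] at h₁; cases h₁
  have h4 : ∀ d, x.seq (v + 1 + d) = none := by
    intro d
    induction d with
    | zero => exact h₂
    | succ d ih =>
      rcases h : x.seq (v + 1 + (d + 1)) with _ | y
      · rfl
      · have := x.downward (v + 1 + d) (by rw [show v + 1 + d + 1 = v + 1 + (d + 1) from rfl, h]; rfl)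
        rw [ih] at this; cases this
  have h5 : v = M := by
    by_contra hne
    have := h4 (M - (v + 1))
    rw [show v + 1 + (M - (v + 1)) = M by omega, hM] at this; cases this
  subst h5
  rw [hM] at h₁
  simp only [Option.some.injEq, Prod.mk.injEq] at h₁
  exact ⟨rfl, h₁.1.symm, h₁.2.symm⟩

lemma induces_of_finRun {c₀ c : Config A n} {ρ : SPath A n} {t : NNReal}
    (h : FinRun c₀ ρ.toFun c t) (hl : ρ.len = t) (ho : Obs (ρ.toFun t) c 0) :
    ∃ (x : TimedComp A n c₀) (M : ℕ), Induces x ρ ∧ x.seq M = some (c, t) ∧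
      x.seq (M + 1) = none := by
  obtain ⟨x, M, hM, hn, hx⟩ := comp_of_finRun h
  refine ⟨x, M, ⟨hx, ?_, ?_⟩, hM, hn _ (by omega)⟩
  · intro hi
    have := hi (M + 1)
    rw [hn _ (by omega)] at this; cases this
  · intro v c₁ t₁ h₁ h₂
    obtain ⟨rfl, rfl, rfl⟩ := comp_unique_last x hM hn h₁ h₂
    exact ⟨hl, ho.1, fun l i cx => by rw [ho.2, add_zero]⟩

lemma isFiniteFrom_iff {c₀ : Config A n} {ρ : SPath A n} :
    ρ.IsFiniteFrom c₀ ↔ ∃ c t, FinRun c₀ ρ.toFun c t ∧ ρ.len = (t : ℝ≥0∞) ∧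
      Obs (ρ.toFun t) c 0 := by
  constructor
  · rintro ⟨x, hi, hf⟩
    obtain ⟨v, c, t, h₁, h₂⟩ := exists_last x hf
    obtain ⟨a, b, d⟩ := hi.2.2 v c t h₁ h₂
    exact ⟨c, t, finRun_of_comp x hi v c t h₁, a, b, fun l i cx => by rw [d, add_zero]⟩
  · rintro ⟨c, t, h, hl, ho⟩
    obtain ⟨x, M, hi, _, hn⟩ := induces_of_finRun h hl ho
    exact ⟨x, hi, M + 1, hn⟩

/-- No transition is enabled at `c`. -/
def Stuck (c : Config A n) : Prop :=
  ∀ c' : Config A n, ¬ ((∃ d : NNReal, 0 < d ∧ DelayStep d c c') ∨ SyncStep c c')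

lemma isDeadlockedFrom_iff {c₀ : Config A n} {ρ : SPath A n} :
    ρ.IsDeadlockedFrom c₀ ↔ ∃ c t, FinRun c₀ ρ.toFun c t ∧ ρ.len = (t : ℝ≥0∞) ∧
      Obs (ρ.toFun t) c 0 ∧ Stuck c := by
  constructor
  · rintro ⟨x, hi, v, c, t, h₁, h₂, hs⟩
    obtain ⟨a, b, d⟩ := hi.2.2 v c t h₁ h₂
    exact ⟨c, t, finRun_of_comp x hi v c t h₁, a, ⟨b, fun l i cx => by rw [d, add_zero]⟩, hs⟩
  · rintro ⟨c, t, h, hl, ho, hs⟩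
    obtain ⟨x, M, hi, hM, hn⟩ := induces_of_finRun h hl ho
    exact ⟨x, hi, M, c, t, hM, hn, hs⟩

/-- An infinite run from configuration `c` at time `t`. -/
def InfRun (c₀ : Config A n) (t₀ : NNReal) (g : NNReal → Config A n)
    (z : ℕ → Config A n × NNReal) : Prop :=
  z 0 = (c₀, t₀) ∧ ∀ v, Step (z v).1 (z (v + 1)).1 (z v).2 (z (v + 1)).2 ∧
    ∀ s, (z v).2 ≤ s → s < (z (v + 1)).2 → Obs (g s) (z v).1 (s - (z v).2)

lemma InfRun.mono {c₀ : Config A n} {t₀ : NNReal} {g : NNReal → Config A n}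
    {z : ℕ → Config A n × NNReal} (h : InfRun c₀ t₀ g z) : Monotone fun v => (z v).2 :=
  monotone_nat_of_le_succ fun v => (h.2 v).1.le

lemma isInfiniteFrom_iff {c₀ : Config A n} {ρ : SPath A n} :
    ρ.IsInfiniteFrom c₀ ↔ ∃ z, InfRun c₀ 0 ρ.toFun z ∧ ρ.len = ⨆ v, ((z v).2 : ℝ≥0∞) := by
  constructor
  · rintro ⟨x, hi, hf⟩
    have hz : ∀ v, ∃ p : Config A n × NNReal, x.seq v = some p := fun v =>
      Option.isSome_iff_exists.mp (hf v)
    choose z hz using hz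
    refine ⟨z, ⟨?_, fun v => ⟨x.step v _ _ _ _ (hz v) (hz (v + 1)),
      hi.1 v _ _ _ _ (hz v) (hz (v + 1))⟩⟩, ?_⟩
    · have := hz 0
      rw [x.zero_def, Option.some.injEq] at this
      exact this.symm
    · rw [hi.2.1 hf]
      simp only [TimedComp.timeAt, hz, Option.map_some, Option.getD_some]
  · rintro ⟨z, ⟨h0, h⟩, hl⟩
    refine ⟨⟨fun v => some (z v), by simp [h0], by simp, ?_⟩, ⟨?_, ?_, ?_⟩, ?_⟩
    · intro v c t c' t' h₁ h₂
      have h₁ := Option.some.inj h₁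
      have h₂ := Option.some.inj h₂
      have := (h v).1
      rw [h₁, h₂] at this
      exact this
    · intro v c t c' t' h₁ h₂
      have h₁ := Option.some.inj h₁
      have h₂ := Option.some.inj h₂
      have := (h v).2
      rw [h₁, h₂] at this
      exact this
    · intro _
      simp only [TimedComp.timeAt, Option.map_some, Option.getD_some]
      exact hl
    · intro v c t _ h₂
      cases h₂
    · intro v; rfl

/-- A finite run followed by an infinite run is an infinite run. -/
lemma infRun_append {c₀ c : Config A n} {g : NNReal → Config A n} {t : NNReal}
    (h : FinRun c₀ g c t) : ∀ z, InfRun c t g z →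
      ∃ z', InfRun c₀ 0 g z' ∧ (⨆ v, ((z' v).2 : ℝ≥0∞)) = ⨆ v, ((z v).2 : ℝ≥0∞) := by
  induction h with
  | nil => intro z hz; exact ⟨z, hz, rfl⟩
  | @snoc c t c' t' h hs ho ih =>
    intro z hz
    obtain ⟨z', h₁, h₂⟩ := ih (fun v => Nat.casesOn v (c, t) z) ⟨rfl, fun v => by
      cases v with
      | zero => simp only [hz.1]; exact ⟨hs, ho⟩
      | succ v => exact hz.2 v⟩
    refine ⟨z', h₁, h₂.trans (le_antisymm (iSup_le fun v => ?_) (iSup_le fun v => ?_))⟩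
    · cases v with
      | zero =>
        refine le_trans ?_ (le_iSup (fun v => ((z v).2 : ℝ≥0∞)) 0)
        simp only [hz.1]
        exact_mod_cast hs.le
      | succ v => exact le_iSup (fun v => ((z v).2 : ℝ≥0∞)) v
    · exact le_iSup (fun v => (((Nat.casesOn v (c, t) z : Config A n × NNReal)).2 : ℝ≥0∞)) (v + 1)

/-! #### Projection and gluing of configurations -/

/-- Synchronization performed by instance `(l, i)`. -/
def SyncAt (c c' : Config A n) (l : Fin k) (i : Fin (n l)) : Prop :=
  ∃ tr ∈ A.trans l,
    tr.1 = c.st l i ∧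
    tr.2.1.sat (c.cl l i) ∧
    guardSat c l i tr.2.2.2.1 ∧
    c'.st l i = tr.2.2.2.2 ∧
    (∀ x, (x ∈ tr.2.2.1 → c'.cl l i x = 0) ∧ (x ∉ tr.2.2.1 → c'.cl l i x = c.cl l i x)) ∧
    (∀ p : Σ h, Fin (n h), p ≠ ⟨l, i⟩ → c'.st p.1 p.2 = c.st p.1 p.2 ∧ c'.cl p.1 p.2 = c.cl p.1 p.2)

def proj (f : ∀ l, Fin (n' l) → Fin (n l)) (c : Config A n) : Config A n' where
  st := fun l i => c.st l (f l i)
  cl := fun l i => c.cl l (f l i)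
  inv_sat := fun l i => c.inv_sat l (f l i)

open Classical in
/-- Overwrite the instances of `b` in the range of `f` by those of `a`. -/
noncomputable def glue (f : ∀ l, Fin (n' l) → Fin (n l)) (a : Config A n') (b : Config A n) :
    Config A n where
  st := fun l i => if h : ∃ j, f l j = i then a.st l h.choose else b.st l i
  cl := fun l i => if h : ∃ j, f l j = i then a.cl l h.choose else b.cl l i
  inv_sat := fun l i => by
    split
    · exact a.inv_sat _ _
    · exact b.inv_sat _ _

variable {f : ∀ l, Fin (n' l) → Fin (n l)}

lemma glue_in (hf : ∀ l, Function.Injective (f l)) (a : Config A n') (b : Config A n) (l : Fin k)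
    (i : Fin (n' l)) : (glue f a b).st l (f l i) = a.st l i ∧ (glue f a b).cl l (f l i) = a.cl l i := by
  have h : ∃ j, f l j = f l i := ⟨i, rfl⟩
  have h2 : h.choose = i := hf l h.choose_spec
  simp only [glue, dif_pos h, h2, and_self]

lemma glue_out (a : Config A n') (b : Config A n) (l : Fin k)
    (i : Fin (n l)) (h : ¬ ∃ j, f l j = i) :
    (glue f a b).st l i = b.st l i ∧ (glue f a b).cl l i = b.cl l i := by
  simp only [glue, dif_neg h, and_self]

lemma proj_glue (hf : ∀ l, Function.Injective (f l)) (a : Config A n') (b : Config A n) :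
    proj f (glue f a b) = a := by
  apply Config.ext'
  · funext l i; exact (glue_in hf a b l i).1
  · funext l i; exact (glue_in hf a b l i).2

lemma glue_proj (hf : ∀ l, Function.Injective (f l)) (b : Config A n) :
    glue f (proj f b) b = b := by
  apply Config.ext'
  · funext l i
    by_cases h : ∃ j, f l j = i
    · obtain ⟨j, rfl⟩ := h; exact (glue_in hf _ b l j).1
    · exact (glue_out _ b l i h).1
  · funext l i
    by_cases h : ∃ j, f l j = i
    · obtain ⟨j, rfl⟩ := h; exact (glue_in hf _ b l j).2
    · exact (glue_out _ b l i h).2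

lemma sig_ne (hf : ∀ l, Function.Injective (f l)) {l : Fin k} {i : Fin (n' l)}
    {p : Σ h, Fin (n' h)} (hp : p ≠ ⟨l, i⟩) :
    (⟨p.1, f p.1 p.2⟩ : Σ h, Fin (n h)) ≠ ⟨l, f l i⟩ := by
  obtain ⟨h, j⟩ := p
  intro he
  rw [Sigma.mk.injEq] at he
  obtain ⟨rfl, he⟩ := he
  have he' : j = i := hf _ (eq_of_heq he)
  exact hp (by subst he'; rfl)

lemma syncAt_proj (hf : ∀ l, Function.Injective (f l)) {c c' : Config A n} {l : Fin k}
    {i : Fin (n' l)} (h : SyncAt c c' l (f l i)) : SyncAt (proj f c) (proj f c') l i := by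
  obtain ⟨tr, htr, h1, h2, h3, h4, h5, h6⟩ := h
  exact ⟨tr, htr, h1, h2, fun p hp => h3 ⟨p.1, f p.1 p.2⟩ (sig_ne hf hp), h4, h5,
    fun p hp => h6 ⟨p.1, f p.1 p.2⟩ (sig_ne hf hp)⟩

lemma syncAt_proj_eq {c c' : Config A n} {l : Fin k}
    {i : Fin (n l)} (hi : ∀ j, f l j ≠ i) (h : SyncAt c c' l i) : proj f c' = proj f c := by
  obtain ⟨tr, htr, h1, h2, h3, h4, h5, h6⟩ := h
  have hne : ∀ h j, (⟨h, f h j⟩ : Σ h, Fin (n h)) ≠ ⟨l, i⟩ := by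
    intro h j he
    rw [Sigma.mk.injEq] at he
    obtain ⟨rfl, he⟩ := he
    exact hi _ (eq_of_heq he)
  apply Config.ext'
  · funext h j; exact (h6 _ (hne h j)).1
  · funext h j; exact (h6 _ (hne h j)).2

lemma sync_proj (hf : ∀ l, Function.Injective (f l)) {c c' : Config A n} (h : SyncStep c c') :
    SyncStep (proj f c) (proj f c') ∨ proj f c' = proj f c := by
  obtain ⟨l, i, h⟩ := h
  by_cases hi : ∃ j, f l j = i
  · obtain ⟨j, rfl⟩ := hi
    exact .inl ⟨l, j, syncAt_proj hf h⟩
  · push Not at hi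
    exact .inr (syncAt_proj_eq hi h)

lemma delay_proj {d : NNReal} {c c' : Config A n} (h : DelayStep d c c') :
    DelayStep d (proj f c) (proj f c') := by
  obtain ⟨h1, h2, h3⟩ := h
  refine ⟨?_, fun l i x => h2 _ _ _, fun l i d' hd => h3 _ _ _ hd⟩
  simp only [proj, h1]

lemma step_proj (hf : ∀ l, Function.Injective (f l)) {c c' : Config A n} {t t' : NNReal}
    (h : Step c c' t t') : Step (proj f c) (proj f c') t t' ∨ (proj f c' = proj f c ∧ t' = t) := by
  rcases h with ⟨d, hd, h, rfl⟩ | ⟨h, rfl⟩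
  · exact .inl (.inl ⟨d, hd, delay_proj h, rfl⟩)
  · rcases sync_proj hf h with h | h
    · exact .inl (.inr ⟨h, rfl⟩)
    · exact .inr ⟨h, rfl⟩

lemma obs_proj {c c' : Config A n} {d : NNReal} (h : Obs c' c d) : Obs (proj f c') (proj f c) d := by
  refine ⟨?_, fun l i x => h.2 _ _ _⟩
  simp only [proj, h.1]

lemma syncAt_glue (hf : ∀ l, Function.Injective (f l)) {a a' : Config A n'} {b : Config A n}
    {l : Fin k} {i : Fin (n' l)} (h : SyncAt a a' l i)
    (hg : ∀ tr ∈ A.trans l, guardSat a l i tr.2.2.2.1 →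
      ∀ h j, (¬ ∃ j', f h j' = j) → b.st h j ∈ tr.2.2.2.1 h) :
    SyncAt (glue f a b) (glue f a' b) l (f l i) := by
  obtain ⟨tr, htr, h1, h2, h3, h4, h5, h6⟩ := h
  have e := glue_in hf a b l i
  have e' := glue_in hf a' b l i
  refine ⟨tr, htr, by rw [e.1, h1], by rw [e.2]; exact h2, ?_, by rw [e'.1, h4],
    by rw [e.2, e'.2]; exact h5, ?_⟩
  · rintro ⟨h, j⟩ hp
    by_cases hj : ∃ j', f h j' = j
    · obtain ⟨j', rfl⟩ := hj
      simp only [(glue_in hf a b h j').1]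
      exact h3 ⟨h, j'⟩ (by
        intro he
        rw [Sigma.mk.injEq] at he
        obtain ⟨rfl, he⟩ := he
        rw [eq_of_heq he] at hp
        exact hp rfl)
    · simp only [(glue_out a b h j hj).1]
      exact hg tr htr h3 h j hj
  · rintro ⟨h, j⟩ hp
    by_cases hj : ∃ j', f h j' = j
    · obtain ⟨j', rfl⟩ := hj
      simp only [(glue_in hf a b h j').1, (glue_in hf a b h j').2, (glue_in hf a' b h j').1,
        (glue_in hf a' b h j').2]
      exact h6 ⟨h, j'⟩ (by
        intro he
        rw [Sigma.mk.injEq] at he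
        obtain ⟨rfl, he⟩ := he
        rw [eq_of_heq he] at hp
        exact hp rfl)
    · simp only [(glue_out a b h j hj).1, (glue_out a b h j hj).2, (glue_out a' b h j hj).1,
        (glue_out a' b h j hj).2, and_self]

def idle (A : ConjPNTA k) (n : Fin k → ℕ) (s : NNReal) : Config A n where
  st := fun l _ => A.init l
  cl := fun _ _ _ => s
  inv_sat := fun l _ => by rw [A.inv_init l]; exact trivial

lemma obs_ext (hf : ∀ l, Function.Injective (f l)) {a a' : Config A n'} {d t t' : NNReal}
    (h : Obs a' a d) (ht : t' = t + d) :
    Obs (glue f a' (idle A n t')) (glue f a (idle A n t)) d := by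
  refine ⟨?_, ?_⟩
  · funext l i
    by_cases hj : ∃ j', f l j' = i
    · obtain ⟨j', rfl⟩ := hj
      rw [(glue_in hf _ _ l j').1, (glue_in hf _ _ l j').1, h.1]
    · rw [(glue_out _ _ l i hj).1, (glue_out _ _ l i hj).1]; rfl
  · intro l i x
    by_cases hj : ∃ j', f l j' = i
    · obtain ⟨j', rfl⟩ := hj
      rw [(glue_in hf _ _ l j').2, (glue_in hf _ _ l j').2, h.2]
    · rw [(glue_out _ _ l i hj).2, (glue_out _ _ l i hj).2]; exact ht

lemma step_ext (hf : ∀ l, Function.Injective (f l)) {a a' : Config A n'} {t t' : NNReal}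
    (h : Step a a' t t') :
    Step (glue f a (idle A n t)) (glue f a' (idle A n t')) t t' := by
  rcases h with ⟨d, hd, ⟨h1, h2, h3⟩, rfl⟩ | ⟨⟨l, i, h⟩, rfl⟩
  · have := obs_ext (f := f) hf (a := a) (a' := a') (d := d) (t := t) ⟨h1, h2⟩ rfl
    refine .inl ⟨d, hd, ⟨this.1, this.2, fun l i d' hd' => ?_⟩, rfl⟩
    by_cases hj : ∃ j', f l j' = i
    · obtain ⟨j', rfl⟩ := hj
      rw [(glue_in hf _ _ l j').1, (glue_in hf _ _ l j').2]
      exact h3 l j' d' hd'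
    · rw [(glue_out _ _ l i hj).1]
      simp only [idle, A.inv_init]
      trivial
  · exact .inr ⟨⟨l, f l i, syncAt_glue hf h fun tr htr _ h j _ => A.guards_conj l tr htr h⟩, rfl⟩

lemma init_ext : glue f (initConfig A n') (idle A n 0) = initConfig A n := by
  apply Config.ext'
  · funext l i; simp [glue, initConfig, idle]
  · funext l i; simp [glue, initConfig, idle]

lemma obs_tsub {t s : NNReal} (h : t ≤ s) : s = t + (s - t) := (add_tsub_cancel_of_le h).symm

/-! #### Adding idle instances -/

lemma finRun_ext (hf : ∀ l, Function.Injective (f l)) {g : NNReal → Config A n'}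
    {c : Config A n'} {t : NNReal} (h : FinRun (initConfig A n') g c t) :
    FinRun (initConfig A n) (fun s => glue f (g s) (idle A n s)) (glue f c (idle A n t)) t := by
  induction h with
  | nil => rw [init_ext]; exact .nil
  | snoc h hs ho ih =>
    exact .snoc ih (step_ext hf hs) fun s h₁ h₂ => obs_ext hf (ho s h₁ h₂) (obs_tsub h₁)

lemma fin_up (hf : ∀ l, Function.Injective (f l)) {ρ : SPath A n'}
    (h : ρ.IsFiniteFrom (initConfig A n')) : ∃ ρ' : SPath A n,
      ρ'.IsFiniteFrom (initConfig A n) ∧ ρ.len = ρ'.len ∧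
      ∀ s, (proj f (ρ'.toFun s)).st = (ρ.toFun s).st := by
  obtain ⟨c, t, hr, hl, ho⟩ := isFiniteFrom_iff.mp h
  refine ⟨⟨ρ.len, fun s => glue f (ρ.toFun s) (idle A n s)⟩, isFiniteFrom_iff.mpr
    ⟨_, t, finRun_ext hf hr, hl, obs_ext hf ho (by simp)⟩, rfl, fun s => ?_⟩
  simp only [proj_glue hf]

lemma inf_up (hf : ∀ l, Function.Injective (f l)) {ρ : SPath A n'}
    (h : ρ.IsInfiniteFrom (initConfig A n')) : ∃ ρ' : SPath A n,
      ρ'.IsInfiniteFrom (initConfig A n) ∧ ρ.len = ρ'.len ∧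
      ∀ s, (proj f (ρ'.toFun s)).st = (ρ.toFun s).st := by
  obtain ⟨z, ⟨h0, hz⟩, hl⟩ := isInfiniteFrom_iff.mp h
  refine ⟨⟨ρ.len, fun s => glue f (ρ.toFun s) (idle A n s)⟩, isInfiniteFrom_iff.mpr
    ⟨fun v => (glue f (z v).1 (idle A n (z v).2), (z v).2), ⟨?_, fun v => ⟨?_, ?_⟩⟩, hl⟩, rfl,
      fun s => ?_⟩
  · simp only [h0, init_ext]
  · exact step_ext hf (hz v).1
  · exact fun s h₁ h₂ => obs_ext hf ((hz v).2 s h₁ h₂) (obs_tsub h₁)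
  · simp only [proj_glue hf]

lemma dead_up (hf : ∀ l, Function.Injective (f l)) {ρ : SPath A n'}
    (h : ρ.IsDeadlockedFrom (initConfig A n')) : ∃ ρ' : SPath A n,
      (ρ'.IsInfiniteFrom (initConfig A n) ∨ ρ'.IsDeadlockedFrom (initConfig A n)) ∧
      ρ.len = ρ'.len ∧ ∀ s, (proj f (ρ'.toFun s)).st = (ρ.toFun s).st := by
  obtain ⟨c, t, hr, hl, ho, hst⟩ := isDeadlockedFrom_iff.mp h
  set g : NNReal → Config A n := fun s => glue f (ρ.toFun s) (idle A n s) with hg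
  have hR := finRun_ext (n := n) hf hr
  -- configurations reachable by synchronization steps
  let R : Set (Config A n) := {e | FinRun (initConfig A n) g e t ∧ proj f e = c}
  have hR0 : glue f c (idle A n t) ∈ R := ⟨hR, proj_glue hf _ _⟩
  have hRs : ∀ e ∈ R, ∀ e', SyncStep e e' → e' ∈ R := by
    rintro e ⟨he, rfl⟩ e' hs
    refine ⟨.snoc he (.inr ⟨hs, rfl⟩) fun s h₁ h₂ => absurd h₂ (not_lt.mpr h₁), ?_⟩
    rcases sync_proj hf hs with h | h
    · exact absurd (.inr h) (hst _)
    · exact h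
  by_cases hT : ∃ e ∈ R, ∀ e', ¬ SyncStep e e'
  · obtain ⟨e, ⟨he, hp⟩, hT⟩ := hT
    refine ⟨⟨ρ.len, Function.update g t e⟩, .inr (isDeadlockedFrom_iff.mpr
      ⟨e, t, ?_, hl, ?_, ?_⟩), rfl, ?_⟩
    · exact finRun_congr he fun s hs => (Function.update_of_ne hs.ne _ _).symm
    · simp only [Function.update_self]
      exact ⟨rfl, fun l i x => (add_zero _).symm⟩
    · rintro c' (⟨d, hd, h⟩ | h)
      · refine hst (proj f c') (.inl ⟨d, hd, ?_⟩)
        rw [← hp]; exact delay_proj h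
      · exact hT _ h
    · intro s
      by_cases hs : s = t
      · subst hs
        simp only [Function.update_self, hp]
        exact ho.1.symm
      · simp only [Function.update_of_ne hs]
        simp only [hg, proj_glue hf]
  · push Not at hT
    choose! nx hnx using hT
    let y : ℕ → Config A n := fun v => nx^[v] (glue f c (idle A n t))
    have hy : ∀ v, y v ∈ R := by
      intro v
      induction v with
      | zero => exact hR0
      | succ v ih =>
        simp only [y, Function.iterate_succ_apply']
        exact hRs _ ih _ (hnx _ ih)
    obtain ⟨z', h₁, h₂⟩ := infRun_append hR (fun v => (y v, t)) ⟨rfl, fun v => ⟨.inr ⟨by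
      simp only [y, Function.iterate_succ_apply']
      exact hnx _ (hy v), rfl⟩, fun s h₁ h₂ => absurd h₂ (not_lt.mpr h₁)⟩⟩
    refine ⟨⟨ρ.len, g⟩, .inl (isInfiniteFrom_iff.mpr ⟨z', h₁, ?_⟩), rfl, fun s => ?_⟩
    · rw [h₂]; simp [hl]
    · simp only [hg, proj_glue hf]

/-! #### Removing instances -/

lemma finRun_proj (hf : ∀ l, Function.Injective (f l)) {g : NNReal → Config A n}
    {c : Config A n} {t : NNReal} (h : FinRun (initConfig A n) g c t) :
    FinRun (initConfig A n') (fun s => proj f (g s)) (proj f c) t := by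
  induction h with
  | nil => exact .nil
  | snoc h hs ho ih =>
    rcases step_proj hf hs with h' | ⟨h₁, h₂⟩
    · exact .snoc ih h' fun s h₁ h₂ => obs_proj (ho s h₁ h₂)
    · rw [h₁, h₂]; exact ih

lemma fin_down (hf : ∀ l, Function.Injective (f l)) {ρ : SPath A n}
    (h : ρ.IsFiniteFrom (initConfig A n)) :
    SPath.IsFiniteFrom (initConfig A n') ⟨ρ.len, fun s => proj f (ρ.toFun s)⟩ := by
  obtain ⟨c, t, hr, hl, ho⟩ := isFiniteFrom_iff.mp h
  exact isFiniteFrom_iff.mpr ⟨_, t, finRun_proj hf hr, hl, obs_proj ho⟩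

lemma inf_down (hf : ∀ l, Function.Injective (f l)) {ρ : SPath A n}
    {z : ℕ → Config A n × NNReal} (hz : InfRun (initConfig A n) 0 ρ.toFun z)
    (hl : ρ.len = ⨆ v, ((z v).2 : ℝ≥0∞))
    (hinf : {v | Step (proj f (z v).1) (proj f (z (v + 1)).1) (z v).2 (z (v + 1)).2}.Infinite) :
    SPath.IsInfiniteFrom (initConfig A n') ⟨ρ.len, fun s => proj f (ρ.toFun s)⟩ := by
  set P : ℕ → Prop := fun v =>
    Step (proj f (z v).1) (proj f (z (v + 1)).1) (z v).2 (z (v + 1)).2 with hP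
  have hinf : {v | P v}.Infinite := hinf
  have hconst : ∀ a d, (∀ v, a ≤ v → v < a + d → ¬ P v) →
      proj f (z (a + d)).1 = proj f (z a).1 ∧ (z (a + d)).2 = (z a).2 := by
    intro a d
    induction d with
    | zero => intro _; exact ⟨rfl, rfl⟩
    | succ d ih =>
      intro h
      obtain ⟨h1, h2⟩ := ih fun v hv hv' => h v hv (by omega)
      rcases step_proj hf (hz.2 (a + d)).1 with h' | ⟨h3, h4⟩
      · exact absurd h' (h (a + d) (by omega) (by omega))
      · exact ⟨h3.trans h1, h4.trans h2⟩
  have hnext : ∀ w, proj f (z (Nat.nth P (w + 1))).1 = proj f (z (Nat.nth P w + 1)).1 ∧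
      (z (Nat.nth P (w + 1))).2 = (z (Nat.nth P w + 1)).2 := by
    intro w
    have hlt : Nat.nth P w < Nat.nth P (w + 1) := Nat.nth_strictMono hinf (Nat.lt_succ_self w)
    have := hconst (Nat.nth P w + 1) (Nat.nth P (w + 1) - (Nat.nth P w + 1)) (by
      intro v hv hv' hPv
      have h1 : v < Nat.nth P (w + 1) := by omega
      have h2 := Nat.le_nth_of_lt_nth_succ h1 hPv
      omega)
    rwa [show Nat.nth P w + 1 + (Nat.nth P (w + 1) - (Nat.nth P w + 1)) = Nat.nth P (w + 1) by
      omega] at this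
  refine isInfiniteFrom_iff.mpr ⟨fun w => (proj f (z (Nat.nth P w)).1, (z (Nat.nth P w)).2),
    ⟨?_, fun w => ?_⟩, ?_⟩
  · have := hconst 0 (Nat.nth P 0) (by
      intro v _ hv hPv
      rw [Nat.zero_add] at hv
      exact absurd hv (not_lt.mpr (by rw [Nat.nth_zero]; exact Nat.sInf_le hPv)))
    rw [Nat.zero_add, hz.1] at this
    simp only [this]
    rfl
  · simp only [hnext w]
    exact ⟨Nat.nth_mem_of_infinite hinf w, fun s h₁ h₂ => obs_proj ((hz.2 _).2 s h₁ h₂)⟩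
  · simp only [hl]
    refine le_antisymm (iSup_le fun v => ?_) (iSup_le fun w => ?_)
    · refine le_trans ?_ (le_iSup (fun w => ((z (Nat.nth P w)).2 : ℝ≥0∞)) v)
      exact_mod_cast hz.mono ((Nat.nth_strictMono hinf).le_apply)
    · exact le_iSup (fun v => ((z v).2 : ℝ≥0∞)) _

/-- At a configuration where time is blocked, a single instance blocks it. -/
lemma exists_blocker {c : Config A n} (h : Stuck c) : ∃ p : Σ l, Fin (n l),
    ∀ d : NNReal, 0 < d → ∃ d' ≤ d, ¬ (A.inv p.1 (c.st p.1 p.2)).sat fun x => c.cl p.1 p.2 x + d' := by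
  by_contra hcon
  push Not at hcon
  have hev : ∀ᶠ d in nhdsWithin (0 : NNReal) (Set.Ioi 0), ∀ p : Σ l, Fin (n l), ∀ d' ≤ d,
      (A.inv p.1 (c.st p.1 p.2)).sat fun x => c.cl p.1 p.2 x + d' := by
    rw [Filter.eventually_all]
    intro p
    obtain ⟨d, hd, hp⟩ := hcon p
    filter_upwards [Ioc_mem_nhdsGT hd] with e he d' hd'
    exact hp d' (hd'.trans he.2)
  obtain ⟨d, hd, hd0⟩ := (hev.and self_mem_nhdsWithin).exists
  exact h ⟨c.st, fun l i x => c.cl l i x + d, fun l i => hd ⟨l, i⟩ d le_rfl⟩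
    (.inl ⟨d, hd0, rfl, fun _ _ _ => rfl, fun l i d' hd' => hd ⟨l, i⟩ d' hd'⟩)

lemma stuck_proj (hf : ∀ l, Function.Injective (f l)) {c : Config A n} (h : Stuck c)
    {p : Σ l, Fin (n l)}
    (hp : ∀ d : NNReal, 0 < d → ∃ d' ≤ d, ¬ (A.inv p.1 (c.st p.1 p.2)).sat
      fun x => c.cl p.1 p.2 x + d')
    (hpf : ∃ j, f p.1 j = p.2)
    (hc : ∀ l (j : Fin (n l)), (¬ ∃ j', f l j' = j) → Nonempty (Fin (n' l)) ∧
      ∀ i : Fin (n' l), ∃ j', j' ≠ i ∧ c.st l (f l j') = c.st l j) : Stuck (proj f c) := by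
  rintro c' (⟨d, hd, h1, h2, h3⟩ | ⟨l, i, hs⟩)
  · obtain ⟨l, i⟩ := p
    obtain ⟨j, hj⟩ : ∃ j, f l j = i := hpf
    subst hj
    obtain ⟨d', hd', hn⟩ := hp d hd
    exact hn (h3 l j d' hd')
  · refine h (glue f c' c) (.inr ⟨l, f l i, ?_⟩)
    have := syncAt_glue (f := f) hf (b := c) hs (by
      intro tr htr hg h j hj
      by_cases hl : h = l
      · subst hl
        obtain ⟨j', hne, he⟩ := (hc h j hj).2 i
        rw [← he]
        exact hg ⟨h, j'⟩ (by
          intro he; rw [Sigma.mk.injEq] at he; exact hne (eq_of_heq he.2))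
      · obtain ⟨j', _, he⟩ := (hc h j hj).2 (hc h j hj).1.some
        rw [← he]
        exact hg ⟨h, j'⟩ (by
          intro he; rw [Sigma.mk.injEq] at he; exact hl he.1))
    rw [glue_proj hf] at this
    exact this

lemma dead_down (hf : ∀ l, Function.Injective (f l)) {ρ : SPath A n} {c : Config A n} {t : NNReal}
    (hr : FinRun (initConfig A n) ρ.toFun c t) (hl : ρ.len = (t : ℝ≥0∞))
    (ho : Obs (ρ.toFun t) c 0) (hs : Stuck (proj f c)) :
    SPath.IsDeadlockedFrom (initConfig A n') ⟨ρ.len, fun s => proj f (ρ.toFun s)⟩ :=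
  isDeadlockedFrom_iff.mpr ⟨_, t, finRun_proj hf hr, hl, obs_proj ho, hs⟩

end Aux

/-! #### Combinatorics -/

lemma exists_kept {S : Type} [Fintype S] {N m : ℕ} (σ : Fin N → S) (z b : Fin N)
    (hm : 2 * Fintype.card S + 1 = m) (hN : m ≤ N) :
    ∃ K : Finset (Fin N), K.card = m ∧ z ∈ K ∧ b ∈ K ∧
      ∀ j, j ∉ K → ∀ i, ∃ j' ∈ K, j' ≠ i ∧ σ j' = σ j := by
  classical
  have key : ∀ s : S, ∃ T : Finset (Fin N), (∀ j ∈ T, σ j = s) ∧ T.card ≤ 2 ∧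
      (σ b = s → b ∈ T) ∧ (T.card = 2 ∨ ∀ j, σ j = s → j ∈ T) := by
    intro s
    by_cases h : (Finset.univ.filter fun j => σ j = s).card ≤ 2
    · exact ⟨Finset.univ.filter fun j => σ j = s, by simp, h, by simp, .inr (by simp)⟩
    · obtain ⟨T, h1, h2, h3⟩ := Finset.exists_subsuperset_card_eq
        (s := Finset.univ.filter fun j => σ j = s ∧ j = b)
        (t := Finset.univ.filter fun j => σ j = s) (n := 2)
        (by intro j; simp; tauto)
        (by
          refine (Finset.card_le_card (t := {b}) (by intro j; simp)).trans (by simp))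
        (by omega)
      refine ⟨T, fun j hj => by simpa using h2 hj, h3.le, fun hb => h1 (by simp [hb]), .inl h3⟩
  choose T hT1 hT2 hT3 hT4 using key
  obtain ⟨K, hK, hKc⟩ := Finset.exists_superset_card_eq (s := insert z (Finset.univ.biUnion T))
    (n := m) (by
      refine (Finset.card_insert_le _ _).trans ?_
      have := Finset.card_biUnion_le_card_mul Finset.univ T 2 (fun s _ => hT2 s)
      rw [Finset.card_univ] at this
      omega) (by simpa using hN)
  have hTK : ∀ s, T s ⊆ K := fun s =>
    (Finset.subset_biUnion_of_mem T (Finset.mem_univ s)).trans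
      ((Finset.subset_insert _ _).trans hK)
  refine ⟨K, hKc, hK (Finset.mem_insert_self _ _), hTK (σ b) (hT3 _ rfl), fun j hj i => ?_⟩
  have h2 : (T (σ j)).card = 2 := by
    rcases hT4 (σ j) with h | h
    · exact h
    · exact absurd (hTK _ (h j rfl)) hj
  obtain ⟨j', h3, h4⟩ := Finset.exists_mem_ne (by omega : 1 < (T (σ j)).card) i
  exact ⟨j', hTK _ h3, h4, hT1 _ _ h3⟩

/-- Lift a map between the instances of the second template. -/
def lift2 (a : ℕ) {m b : ℕ} (h : Fin m → Fin b) : ∀ l, Fin (two a m l) → Fin (two a b l)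
  | ⟨0, _⟩ => fun i => i
  | ⟨1, _⟩ => h

lemma lift2_inj (a : ℕ) {m b : ℕ} {h : Fin m → Fin b} (hh : Function.Injective h) :
    ∀ l, Function.Injective (lift2 a h l)
  | ⟨0, _⟩ => fun _ _ e => e
  | ⟨1, _⟩ => hh

section Two

variable {A : ConjPNTA 2} {a m b : ℕ}

/-- Transfer of satisfaction along an instance map preserving the first instance. -/
lemma sat_transfer {h : Fin m → Fin b} (hm : 0 < m) (hb : 0 < b) (h0 : h ⟨0, hm⟩ = ⟨0, hb⟩)
    (Φ : IMTL (A.State 1)) {ρ : SPath A (two a b)} {ρ' : SPath A (two a m)}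
    (hl : ρ.len = ρ'.len) (hs : ∀ s, (proj (lift2 a h) (ρ.toFun s)).st = (ρ'.toFun s).st) :
    satIMTL (valFirst A (two a b) 1 hb) Φ ρ ↔ satIMTL (valFirst A (two a m) 1 hm) Φ ρ' := by
  apply sat_congr _ _ _ _ _ hl
  intro p s
  have : (ρ'.toFun s).st 1 ⟨0, hm⟩ = (ρ.toFun s).st 1 ⟨0, hb⟩ := by
    rw [← hs s]
    show (ρ.toFun s).st 1 (h ⟨0, hm⟩) = _
    rw [h0]
    rfl
  simp only [valFirst]
  rw [this]

lemma satQ_up (hm : 0 < m) (hb : 0 < b) (hmb : m ≤ b) (Φ : IMTL (A.State 1)) (Q : PathQ)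
    (hQ : Q = PathQ.E ∨ Q = PathQ.Einf ∨ Q = PathQ.Efin)
    (h : SatQ A (two a m) (valFirst A (two a m) 1 hm) Q Φ) :
    SatQ A (two a b) (valFirst A (two a b) 1 hb) Q Φ := by
  have hi := lift2_inj a (Fin.castLE_injective hmb)
  have ht := fun ρ ρ' => sat_transfer (A := A) (a := a) (h := Fin.castLE hmb) hm hb rfl Φ
    (ρ := ρ) (ρ' := ρ')
  rcases hQ with rfl | rfl | rfl
  · obtain ⟨ρ, hρ | hρ, hsat⟩ := h
    · obtain ⟨ρ', h1, h2, h3⟩ := inf_up hi hρ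
      exact ⟨ρ', .inl h1, (ht ρ' ρ h2.symm h3).mpr hsat⟩
    · obtain ⟨ρ', h1, h2, h3⟩ := dead_up hi hρ
      exact ⟨ρ', h1, (ht ρ' ρ h2.symm h3).mpr hsat⟩
  · obtain ⟨ρ, hρ, hsat⟩ := h
    obtain ⟨ρ', h1, h2, h3⟩ := inf_up hi hρ
    exact ⟨ρ', h1, (ht ρ' ρ h2.symm h3).mpr hsat⟩
  · obtain ⟨ρ, hρ, hsat⟩ := h
    obtain ⟨ρ', h1, h2, h3⟩ := fin_up hi hρ
    exact ⟨ρ', h1, (ht ρ' ρ h2.symm h3).mpr hsat⟩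

lemma satQ_down_fin (hb : 0 < b) (Φ : IMTL (A.State 1))
    (h : SatQ A (two a b) (valFirst A (two a b) 1 hb) .Efin Φ) :
    SatQ A (two a 1) (valFirst A (two a 1) 1 Nat.one_pos) .Efin Φ := by
  obtain ⟨ρ, hρ, hsat⟩ := h
  have hi := lift2_inj a (h := fun _ : Fin 1 => (⟨0, hb⟩ : Fin b))
    (fun _ _ _ => Subsingleton.elim _ _)
  exact ⟨_, fin_down hi hρ, (sat_transfer Nat.one_pos hb rfl Φ rfl fun s => rfl).mp hsat⟩

lemma satQ_down_inf (hb : 0 < b) (hb2 : 2 ≤ b) (Φ : IMTL (A.State 1))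
    (h : SatQ A (two a b) (valFirst A (two a b) 1 hb) .Einf Φ) :
    SatQ A (two a 2) (valFirst A (two a 2) 1 Nat.two_pos) .Einf Φ := by
  obtain ⟨ρ, hρ, hsat⟩ := h
  obtain ⟨z, hz, hl⟩ := isInfiniteFrom_iff.mp hρ
  let z0 : Fin b := ⟨0, hb⟩
  let F : {j : Fin b // j ≠ z0} → Fin 2 → Fin b := fun j i => if i.val = 0 then z0 else j.1
  have hF : ∀ j, Function.Injective (F j) := by
    intro j x y hxy
    have := j.2
    fin_cases x <;> fin_cases y <;> simp_all [F]
  let j1 : {j : Fin b // j ≠ z0} := ⟨⟨1, hb2⟩, by simp [z0]⟩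
  have hex : ∀ v, ∃ j, Step (proj (lift2 a (F j)) (z v).1) (proj (lift2 a (F j)) (z (v + 1)).1)
      (z v).2 (z (v + 1)).2 := by
    intro v
    rcases (hz.2 v).1 with ⟨d, hd, h, ht⟩ | ⟨⟨l, i, h⟩, ht⟩
    · exact ⟨j1, .inl ⟨d, hd, delay_proj h, ht⟩⟩
    · have hfire : ∀ j i', lift2 a (F j) l i' = i → Step (proj (lift2 a (F j)) (z v).1)
          (proj (lift2 a (F j)) (z (v + 1)).1) (z v).2 (z (v + 1)).2 := by
        intro j i' hi'
        subst hi'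
        exact .inr ⟨⟨l, i', syncAt_proj (lift2_inj a (hF j)) h⟩, ht⟩
      match l, i, hfire with
      | ⟨0, _⟩, i, hfire => exact ⟨j1, hfire j1 i rfl⟩
      | ⟨1, _⟩, i, hfire =>
        by_cases hi : i = z0
        · exact ⟨j1, hfire j1 (0 : Fin 2) hi.symm⟩
        · exact ⟨⟨i, hi⟩, hfire ⟨i, hi⟩ (1 : Fin 2) rfl⟩
  choose J hJ using hex
  obtain ⟨j, hj⟩ := Finite.exists_infinite_fiber J
  have hj := Set.infinite_coe_iff.mp hj
  refine ⟨_, inf_down (lift2_inj a (hF j)) hz hl (hj.mono ?_),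
    (sat_transfer (h := F j) Nat.two_pos hb rfl Φ rfl fun s => rfl).mp hsat⟩
  intro v hv
  have hv : J v = j := hv
  have := hJ v
  rw [hv] at this
  exact this

lemma satQ_down_dead (ha : 0 < a) (hm : 0 < m) (hb : 0 < b) (hmS : 2 * A.size 1 + 1 = m)
    (hmb : m ≤ b) (Φ : IMTL (A.State 1)) {ρ : SPath A (two a b)}
    (hρ : ρ.IsDeadlockedFrom (initConfig A (two a b)))
    (hsat : satIMTL (valFirst A (two a b) 1 hb) Φ ρ) :
    SatQ A (two a m) (valFirst A (two a m) 1 hm) .E Φ := by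
  obtain ⟨c, t, hr, hl, ho, hst⟩ := isDeadlockedFrom_iff.mp hρ
  obtain ⟨p, hp⟩ := exists_blocker hst
  let z0 : Fin b := ⟨0, hb⟩
  obtain ⟨bl, hbl⟩ : ∃ bl : Fin b, ∀ i : Fin b, p = ⟨1, i⟩ → i = bl := by
    obtain ⟨l, i⟩ := p
    match l, i with
    | ⟨0, _⟩, i =>
      refine ⟨z0, fun i' he => ?_⟩
      have := congrArg (fun q => q.1.val) he
      simp at this
    | ⟨1, _⟩, i =>
      refine ⟨i, fun i' he => ?_⟩
      exact (eq_of_heq (Sigma.mk.inj he).2).symm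
  let _ := A.stateFintype 1
  obtain ⟨K, hKc, hK0, hKb, hK⟩ := exists_kept (fun j : Fin b => c.st 1 j) z0 bl hmS hmb
  let h : Fin m → Fin b := K.orderEmbOfFin hKc
  have hh : Function.Injective h := (K.orderEmbOfFin hKc).injective
  have hrange : ∀ j ∈ K, ∃ i, h i = j := by
    intro j hj
    have : j ∈ Set.range (K.orderEmbOfFin hKc) := by
      rw [Finset.range_orderEmbOfFin]; exact hj
    exact this
  have h0 : h ⟨0, hm⟩ = z0 := by
    have e := Finset.orderEmbOfFin_zero hKc hm
    refine e.trans (le_antisymm (Finset.min'_le _ _ hK0) (Nat.zero_le _))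
  have hi := lift2_inj a hh
  have hstuck : Stuck (proj (lift2 a h) c) := by
    refine stuck_proj hi hst hp ?_ ?_
    · obtain ⟨l, i⟩ := p
      match l, i, hbl with
      | ⟨0, _⟩, i, _ => exact ⟨i, rfl⟩
      | ⟨1, _⟩, i, hbl =>
        have : i = bl := hbl i rfl
        subst this
        exact hrange _ hKb
    · intro l j hj
      match l, j, hj with
      | ⟨0, _⟩, j, hj => exact absurd ⟨j, rfl⟩ hj
      | ⟨1, _⟩, j, hj =>
        refine ⟨⟨(⟨0, hm⟩ : Fin m)⟩, fun i => ?_⟩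
        have hjK : j ∉ K := fun hjK => hj (hrange j hjK)
        obtain ⟨j', h1, h2, h3⟩ := hK j hjK (h i)
        obtain ⟨i', rfl⟩ := hrange j' h1
        exact ⟨i', fun e => h2 (by rw [e]), h3⟩
  exact ⟨_, .inr (dead_down hi hr hl ho hstuck),
    (sat_transfer hm hb h0 Φ rfl fun s => rfl).mp hsat⟩

end Two

-- STATEMENT 8
theorem truncation_first_step (A : ConjPNTA 2) (Φ : IMTL (A.State 1))
    (Q : PathQ) (hQ : Q = PathQ.E ∨ Q = PathQ.Einf ∨ Q = PathQ.Efin)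
    (n₁ n₂ : ℕ) (h₁ : 1 ≤ n₁) (h₂ : 1 ≤ n₂) :
    SatQ A (two n₁ n₂) (valFirst A (two n₁ n₂) 1 h₂) Q Φ ↔
      SatQ A (two n₁ (min n₂ (cutoffTracked A Q)))
        (valFirst A (two n₁ (min n₂ (cutoffTracked A Q))) 1
          (lt_min h₂ (cutoffTracked_pos A Q))) Q Φ := by
  have hpos : 0 < min n₂ (cutoffTracked A Q) := lt_min h₂ (cutoffTracked_pos A Q)
  refine ⟨fun h => ?_, fun h => satQ_up hpos h₂ (min_le_left _ _) Φ Q hQ h⟩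
  rcases le_or_gt n₂ (cutoffTracked A Q) with hle | hlt
  · exact satQ_up h₂ hpos (le_min le_rfl hle) Φ Q hQ h
  have hlt' := hlt.le
  have hgoal : ∀ m (hm : 0 < m), m = min n₂ (cutoffTracked A Q) →
      SatQ A (two n₁ m) (valFirst A (two n₁ m) 1 hm) Q Φ →
      SatQ A (two n₁ (min n₂ (cutoffTracked A Q)))
        (valFirst A (two n₁ (min n₂ (cutoffTracked A Q))) 1
          (lt_min h₂ (cutoffTracked_pos A Q))) Q Φ := by
    intro m hm hme hs
    exact satQ_up hm hpos hme.le Φ Q hQ hs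
  have hmin : cutoffTracked A Q = min n₂ (cutoffTracked A Q) := (min_eq_right hlt').symm
  rcases hQ with rfl | rfl | rfl
  · refine hgoal (cutoffTracked A .E) (cutoffTracked_pos A .E) hmin ?_
    have hsz := A.size_pos 1
    have hc : cutoffTracked A .E = 2 * A.size 1 + 1 := rfl
    obtain ⟨ρ, hρ | hρ, hsat⟩ := h
    · obtain ⟨ρ', h1, h2⟩ := satQ_down_inf (a := n₁) h₂ (by omega) Φ ⟨ρ, hρ, hsat⟩
      exact satQ_up Nat.two_pos _ (by omega) Φ .E (.inl rfl) ⟨ρ', .inl h1, h2⟩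
    · exact satQ_down_dead h₁ (cutoffTracked_pos A .E) h₂ rfl hlt' Φ hρ hsat
  · exact hgoal 2 Nat.two_pos hmin (satQ_down_inf h₂ hlt' Φ h)
  · exact hgoal 1 Nat.one_pos hmin (satQ_down_fin h₂ Φ h)

end PNTA
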